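/- arXiv:2110.00237 — 2 statements merged into one kernel-verified Lean document; each statement's English description precedes it below -/
import Mathlib

section
/- Let s₀ > 1 be a real number and M a positive integer. Suppose a, b, c, d are integers with b ≥ 0, c ≥ 1, a > c·ζ(s₀), and d ≥ ζ(s₀)·b + (M+1)·(a·ζ(s₀) − c). Then a > c > 0, ad − bc > 0, σ_s(an+b) < σ_s(cn+d) for all real s ≥ s₀ and all integers n with 1 ≤ n ≤ M, and there exists a positive integer N such that σ_s(an+b) > σ_s(cn+d) for all real s ≥ s₀ and all integers n ≥ N. -/
/-!
For `s ≥ s₀ > 1` and `m ≥ 1` one has `m ^ s ≤ σ_s(m) = m ^ s * ∑_{d ∣ m} d ^ (-s) ≤ m ^ s * ζ(s₀)`.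
As `ζ(s₀) ≥ 1` and `s ≥ 1`, also `ζ(s₀) ≤ ζ(s₀) ^ s`, so `σ_s(m) ≤ (m * ζ(s₀)) ^ s`. Hence
`σ_s(m) < σ_s(k)` as soon as `m * ζ(s₀) < k`, uniformly in `s` (`sigmaR_lt_of_mul_zetaR_lt`).
Both inequalities of the theorem then reduce to linear inequalities in `n`:
`(a n + b) ζ(s₀) < c n + d` holds for `n ≤ M` by the choice of `d`, and
`(c n + d) ζ(s₀) < a n + b` holds for all large `n` because `a > c ζ(s₀)`.
-/

/-- `σ_s(n) = ∑_{d ∣ n} d^s` over the positive divisors of `n`. -/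
noncomputable def sigmaR (s : ℝ) (n : ℕ) : ℝ := ∑ d ∈ n.divisors, (d : ℝ) ^ s

/-- `ζ(t) = ∑_{k=1}^∞ k^{-t}` for real `t`. -/
noncomputable def zetaR (t : ℝ) : ℝ := ∑' k : ℕ, ((k : ℝ) + 1) ^ (-t)

lemma summable_rpow_neg {t : ℝ} (ht : 1 < t) : Summable fun k : ℕ => (k : ℝ) ^ (-t) :=
  Real.summable_nat_rpow.2 (by linarith)

lemma tsum_rpow_neg_eq_zetaR {t : ℝ} (ht : 1 < t) : ∑' k : ℕ, (k : ℝ) ^ (-t) = zetaR t := by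
  rw [(summable_rpow_neg ht).tsum_eq_zero_add, zetaR, Nat.cast_zero,
    Real.zero_rpow (by linarith), zero_add]
  simp

lemma one_le_zetaR {t : ℝ} (ht : 1 < t) : 1 ≤ zetaR t := by
  rw [← tsum_rpow_neg_eq_zetaR ht]
  have h := (summable_rpow_neg ht).le_tsum 1 fun k _ => by positivity
  simpa using h

lemma rpow_le_sigmaR (s : ℝ) {m : ℕ} (hm : 0 < m) : (m : ℝ) ^ s ≤ sigmaR s m :=
  Finset.single_le_sum (f := fun d : ℕ => (d : ℝ) ^ s) (fun _ _ => by positivity)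
    (Nat.mem_divisors_self m hm.ne')

lemma sigmaR_le {s₀ s : ℝ} (hs₀ : 1 < s₀) (hs : s₀ ≤ s) (m : ℕ) :
    sigmaR s m ≤ (m : ℝ) ^ s * zetaR s₀ := by
  -- Pair each divisor `e` with `m / e`.
  have h1 : sigmaR s m = ∑ e ∈ m.divisors, ((m / e : ℕ) : ℝ) ^ s :=
    (Nat.sum_div_divisors m fun e : ℕ => (e : ℝ) ^ s).symm
  have h2 : ∀ e ∈ m.divisors, ((m / e : ℕ) : ℝ) ^ s ≤ (m : ℝ) ^ s * (e : ℝ) ^ (-s₀) := by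
    intro e he
    have hpos : 0 < e := Nat.pos_of_mem_divisors he
    rw [Nat.cast_div (Nat.dvd_of_mem_divisors he) (by positivity),
      Real.div_rpow (by positivity) (by positivity), div_eq_mul_inv,
      ← Real.rpow_neg (by positivity)]
    have h1e : (1 : ℝ) ≤ e := by exact_mod_cast hpos
    gcongr
  calc sigmaR s m ≤ ∑ e ∈ m.divisors, (m : ℝ) ^ s * (e : ℝ) ^ (-s₀) := h1 ▸ Finset.sum_le_sum h2
    _ = (m : ℝ) ^ s * ∑ e ∈ m.divisors, (e : ℝ) ^ (-s₀) := by rw [Finset.mul_sum]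
    _ ≤ (m : ℝ) ^ s * zetaR s₀ := by
      rw [← tsum_rpow_neg_eq_zetaR hs₀]
      gcongr
      exact (summable_rpow_neg hs₀).sum_le_tsum _ fun _ _ => by positivity

/-- The comparison principle: a gap by the factor `ζ(s₀)` between the arguments forces the
inequality between the values of `σ_s` for every `s ≥ s₀` at once. -/
lemma sigmaR_lt_of_mul_zetaR_lt {s₀ s : ℝ} (hs₀ : 1 < s₀) (hs : s₀ ≤ s) {m k : ℕ}
    (h : (m : ℝ) * zetaR s₀ < k) : sigmaR s m < sigmaR s k := by
  have hZ := one_le_zetaR hs₀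
  have hk : 0 < k := by
    have : (0 : ℝ) < k := lt_of_le_of_lt (by positivity) h
    exact_mod_cast this
  calc sigmaR s m ≤ (m : ℝ) ^ s * zetaR s₀ := sigmaR_le hs₀ hs m
    _ ≤ (m : ℝ) ^ s * zetaR s₀ ^ s := by
      gcongr
      exact Real.self_le_rpow_of_one_le hZ (by linarith)
    _ = ((m : ℝ) * zetaR s₀) ^ s := (Real.mul_rpow (by positivity) (by positivity)).symm
    _ < (k : ℝ) ^ s := Real.rpow_lt_rpow (by positivity) h (by linarith)
    _ ≤ sigmaR s k := rpow_le_sigmaR s hk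

theorem stmt_15 (s₀ : ℝ) (hs₀ : 1 < s₀) (M : ℕ) (hM : 0 < M)
    (a b c d : ℕ) (hb : 0 ≤ b) (hc : 1 ≤ c)
    (hac : (a : ℝ) > (c : ℝ) * zetaR s₀)
    (hd : (d : ℝ) ≥ zetaR s₀ * b + ((M : ℝ) + 1) * ((a : ℝ) * zetaR s₀ - c)) :
    a > c ∧ c > 0 ∧ (a : ℤ) * d - (b : ℤ) * c > 0 ∧
    (∀ s : ℝ, s₀ ≤ s → ∀ n : ℕ, 1 ≤ n → n ≤ M →
      sigmaR s (a * n + b) < sigmaR s (c * n + d)) ∧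
    (∃ N : ℕ, 0 < N ∧ ∀ s : ℝ, s₀ ≤ s → ∀ n : ℕ, N ≤ n →
      sigmaR s (a * n + b) > sigmaR s (c * n + d)) := by
  have hZ := one_le_zetaR hs₀
  set Z := zetaR s₀ with hZdef
  have hc' : (1 : ℝ) ≤ c := by exact_mod_cast hc
  have hac' : (c : ℝ) < a := by nlinarith
  have haZ : 0 < (a : ℝ) * Z - c := by nlinarith
  have hbd : (b : ℝ) < d := by
    have hb0 : (0 : ℝ) ≤ b := by positivity
    have : 0 < ((M : ℝ) + 1) * ((a : ℝ) * Z - c) := by positivity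
    nlinarith
  refine ⟨by exact_mod_cast hac', hc, ?_, ?_, ?_⟩
  · have hacn : (c : ℤ) < a := by exact_mod_cast hac'
    have hbdn : (b : ℤ) < d := by exact_mod_cast hbd
    have hb0 : (0 : ℤ) ≤ b := by positivity
    have hc0 : (1 : ℤ) ≤ c := by exact_mod_cast hc
    nlinarith
  · intro s hs n _ hn
    refine sigmaR_lt_of_mul_zetaR_lt hs₀ hs ?_
    have hn' : (n : ℝ) < M + 1 := by exact_mod_cast Nat.lt_succ_of_le hn
    have := mul_lt_mul_of_pos_right hn' haZ
    rw [← hZdef]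
    push_cast
    linarith
  · have hgap : 0 < (a : ℝ) - c * Z := by linarith
    obtain ⟨N, hN⟩ := exists_nat_gt ((d : ℝ) * Z / (a - c * Z))
    refine ⟨N + 1, by positivity, fun s hs n hn => ?_⟩
    refine sigmaR_lt_of_mul_zetaR_lt hs₀ hs ?_
    have hn' : (N : ℝ) ≤ n := by exact_mod_cast (Nat.le_succ N).trans hn
    have hlt := (div_lt_iff₀ hgap).1 (hN.trans_le hn')
    have hb0 : (0 : ℝ) ≤ b := by positivity
    rw [← hZdef]
    push_cast
    linarith
end

section
/- For each real number s₀ > 1 and each positive integer M, there exist integers a, b, c, d, N with b ≥ 0, d ≥ 0, 0 < a < c, ad − bc < 0, and N ≥ M + 1 such that σ_s(an+b) > σ_s(cn+d) for all real s ≥ s₀ and all integers n with 1 ≤ n ≤ M, and σ_s(an+b) < σ_s(cn+d) for all real s ≥ s₀ and all integers n ≥ N. Moreover, for each positive integer M, there exist integers a, b, c, d with b ≥ 0, d ≥ 0, 0 < a < c, ad − bc < 0, and a real number s₀ > 1 such that σ_s(an+b) > σ_s(cn+d) for all real s ≥ s₀ and all integers n with 1 ≤ n ≤ M, and σ_s(an+b)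 < σ_s(cn+d) for all real s ≥ s₀ and all integers n ≥ M + 1. -/
/-- The Dirichlet series `∑ k ^ (-t)`. For `t > 0` the term at `k = 0` is `0⁻¹ = 0`, so this
is `ζ(t)` for `t > 1`. -/
noncomputable def zetaSum (t : ℝ) : ℝ := ∑' k : ℕ, ((k : ℝ) ^ t)⁻¹

lemma sigmaR_le_s17 {t s : ℝ} (ht : 1 < t) (hts : t ≤ s) (m : ℕ) :
    sigmaR s m ≤ (m : ℝ) ^ s * zetaSum t := by
  have hsum : Summable (fun k : ℕ => ((k : ℝ) ^ t)⁻¹) := Real.summable_nat_rpow_inv.2 ht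
  have h1 : sigmaR s m = ∑ k ∈ m.divisors, (m : ℝ) ^ s * ((k : ℝ) ^ s)⁻¹ := by
    unfold sigmaR
    rw [← Nat.sum_div_divisors m (fun d => (d : ℝ) ^ s)]
    refine Finset.sum_congr rfl fun k hk => ?_
    rw [Nat.cast_div_charZero (Nat.dvd_of_mem_divisors hk),
      Real.div_rpow (Nat.cast_nonneg _) (Nat.cast_nonneg _), div_eq_mul_inv]
  rw [h1, ← Finset.mul_sum]
  refine mul_le_mul_of_nonneg_left ?_ (by positivity)
  calc ∑ k ∈ m.divisors, ((k : ℝ) ^ s)⁻¹ ≤ ∑ k ∈ m.divisors, ((k : ℝ) ^ t)⁻¹ := by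
        refine Finset.sum_le_sum fun k hk => ?_
        have hk1 : (1 : ℝ) ≤ k := by exact_mod_cast Nat.pos_of_mem_divisors hk
        have : (0 : ℝ) < k := by linarith
        exact inv_anti₀ (by positivity) (Real.rpow_le_rpow_of_exponent_le hk1 hts)
    _ ≤ zetaSum t := hsum.sum_le_tsum _ fun k _ => by positivity

lemma le_sigmaR (s : ℝ) {m : ℕ} (hm : m ≠ 0) : (m : ℝ) ^ s ≤ sigmaR s m :=
  Finset.single_le_sum (f := fun d : ℕ => (d : ℝ) ^ s) (fun _ _ => by positivity)
    (Nat.mem_divisors_self m hm)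

lemma sigmaR_lt_sigmaR {t s K : ℝ} (ht : 1 < t) (hts : t ≤ s) (hK : 0 < K)
    (hKs : zetaSum t < K ^ s) {m m' : ℕ} (hm : 0 < m) (h : K * m ≤ m') :
    sigmaR s m < sigmaR s m' := by
  have hm0 : (0 : ℝ) < m := by exact_mod_cast hm
  have hm' : m' ≠ 0 := by
    rintro rfl
    have := mul_pos hK hm0
    simp at h
    linarith
  calc sigmaR s m ≤ (m : ℝ) ^ s * zetaSum t := sigmaR_le_s17 ht hts m
    _ < (m : ℝ) ^ s * K ^ s := mul_lt_mul_of_pos_left hKs (by positivity)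
    _ = (K * m) ^ s := by rw [Real.mul_rpow hK.le hm0.le, mul_comm]
    _ ≤ (m' : ℝ) ^ s := Real.rpow_le_rpow (by positivity) h (by linarith)
    _ ≤ sigmaR s m' := le_sigmaR s hm'

theorem stmt_17 :
    (∀ s₀ : ℝ, 1 < s₀ → ∀ M : ℕ, 0 < M →
      ∃ a b c d N : ℕ, 0 < a ∧ a < c ∧ (a : ℤ) * d - (b : ℤ) * c < 0 ∧
        M + 1 ≤ N ∧
        (∀ s : ℝ, s₀ ≤ s → ∀ n : ℕ, 1 ≤ n → n ≤ M →
          sigmaR s (a * n + b) > sigmaR s (c * n + d)) ∧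
        (∀ s : ℝ, s₀ ≤ s → ∀ n : ℕ, N ≤ n →
          sigmaR s (a * n + b) < sigmaR s (c * n + d))) ∧
    (∀ M : ℕ, 0 < M →
      ∃ a b c d : ℕ, 0 < a ∧ a < c ∧ (a : ℤ) * d - (b : ℤ) * c < 0 ∧
        ∃ s₀ : ℝ, 1 < s₀ ∧
          (∀ s : ℝ, s₀ ≤ s → ∀ n : ℕ, 1 ≤ n → n ≤ M →
            sigmaR s (a * n + b) > sigmaR s (c * n + d)) ∧
          (∀ s : ℝ, s₀ ≤ s → ∀ n : ℕ, M + 1 ≤ n →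
            sigmaR s (a * n + b) < sigmaR s (c * n + d))) := by
  constructor
  · intro s₀ hs₀ M hM
    obtain ⟨k, hk⟩ := exists_nat_gt (zetaSum s₀)
    obtain ⟨K, hKk, hK1⟩ : ∃ K : ℕ, k ≤ K ∧ 1 ≤ K := ⟨k + 1, by omega, by omega⟩
    have hK1' : (1 : ℝ) ≤ K := by exact_mod_cast hK1
    have hKs : ∀ s : ℝ, s₀ ≤ s → zetaSum s₀ < (K : ℝ) ^ s := fun s hs => by
      have h1 : (k : ℝ) ≤ K := by exact_mod_cast hKk
      have h2 : (K : ℝ) ≤ (K : ℝ) ^ s := Real.self_le_rpow_of_one_le hK1' (by linarith)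
      linarith
    refine ⟨1, 2 * K ^ 2 * M, 2 * K, 0, 2 * K ^ 2 * M + M + 1, by omega, by omega, ?_, by omega,
      ?_, ?_⟩
    · push_cast
      have h1 : (0 : ℤ) < K := by exact_mod_cast hK1
      have h2 : (0 : ℤ) < M := by exact_mod_cast hM
      have : (0 : ℤ) < 2 * K ^ 2 * M * (2 * K) := by positivity
      linarith
    · intro s hs n hn hnM
      refine sigmaR_lt_sigmaR hs₀ hs (by linarith) (hKs s hs) (by positivity) ?_
      have : K * (2 * K * n + 0) ≤ 1 * n + 2 * K ^ 2 * M := by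
        have := Nat.mul_le_mul_left (2 * K ^ 2) hnM
        nlinarith
      exact_mod_cast this
    · intro s hs n hn
      refine sigmaR_lt_sigmaR hs₀ hs (by linarith) (hKs s hs) (by omega) ?_
      have : K * (1 * n + 2 * K ^ 2 * M) ≤ 2 * K * n + 0 := by
        have h : 2 * K ^ 2 * M ≤ n := by omega
        have := Nat.mul_le_mul_left K h
        nlinarith
      exact_mod_cast this
  · intro M hM
    have hM0 : (0 : ℝ) < M := by exact_mod_cast hM
    set K : ℝ := (4 * M + 4) / (4 * M + 3) with hKdef
    have hK : 1 < K := by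
      rw [hKdef, one_lt_div (by positivity)]
      linarith
    obtain ⟨j, hj⟩ := pow_unbounded_of_one_lt (zetaSum 2) hK
    have hKs : ∀ s : ℝ, (j : ℝ) + 2 ≤ s → zetaSum 2 < K ^ s := fun s hs => by
      refine hj.trans_le ?_
      rw [← Real.rpow_natCast]
      exact Real.rpow_le_rpow_of_exponent_le hK.le (by linarith)
    have hj0 : (0 : ℝ) ≤ j := Nat.cast_nonneg j
    refine ⟨2, 2 * M + 1, 4, 0, by omega, by omega, by push_cast; omega, j + 2, by linarith, ?_, ?_⟩
    · intro s hs n hn hnM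
      refine sigmaR_lt_sigmaR one_lt_two (by linarith) (by linarith) (hKs s hs) (by omega) ?_
      have hnM' : (n : ℝ) ≤ M := by exact_mod_cast hnM
      rw [hKdef, div_mul_eq_mul_div, div_le_iff₀ (by positivity)]
      push_cast
      nlinarith
    · intro s hs n hn
      refine sigmaR_lt_sigmaR one_lt_two (by linarith) (by linarith) (hKs s hs) (by omega) ?_
      have hn' : (M : ℝ) + 1 ≤ n := by exact_mod_cast hn
      rw [hKdef, div_mul_eq_mul_div, div_le_iff₀ (by positivity)]
      push_cast
      nlinarith
end
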